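/- Under the stated setup and assumptions, the individual canonical angles after rank-k truncation satisfy max{sin θ_j', sin ν_j'} ≤ γ_j · (γ_k^{2q}/(1−γ_k)) · ‖Ω_2Ω_1†‖₂ for every j = 1,…,k, where θ_j' and ν_j' are the canonical angles between the column spaces of U_k and Û_k, and of V_k and V̂_k, respectively, arranged increasingly. -/

import Mathlib

open scoped ENNReal
open Matrix

/-- The `j`-th largest singular value (0-indexed) of a complex matrix,
obtained as the decreasingly sorted square roots of the eigenvalues of `Mᴴ * M`. -/
noncomputable def sval {m n : ℕ} (M : Matrix (Fin m) (Fin n) ℂ) (j : ℕ) : ℝ :=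
  (List.insertionSort (· ≥ ·)
    ((List.ofFn (Matrix.isHermitian_conjTranspose_mul_self M).eigenvalues).map Real.sqrt)).getD j 0

/-- The Schatten-`p` norm (`p = ∞` gives the spectral norm). -/
noncomputable def schatten {m n : ℕ} (p : ℝ≥0∞) (M : Matrix (Fin m) (Fin n) ℂ) : ℝ :=
  if p = ⊤ then sval M 0
  else (∑ j ∈ Finset.range n, sval M j ^ p.toReal) ^ (1 / p.toReal)

/-- Moore–Penrose pseudoinverse of a full-row-rank matrix. -/
noncomputable def rpinv {a b : ℕ} (M : Matrix (Fin a) (Fin b) ℂ) : Matrix (Fin b) (Fin a) ℂ :=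
  Mᴴ * (M * Mᴴ)⁻¹

/-- Rectangular diagonal matrix with entries `σ (off), σ (off+1), …` on the diagonal. -/
noncomputable def diagRect (σ : ℕ → ℝ) (off a b : ℕ) : Matrix (Fin a) (Fin b) ℂ :=
  Matrix.of fun i j => if (i : ℕ) = (j : ℕ) then (σ (off + (i : ℕ)) : ℂ) else 0

/-- The first `b` columns of a matrix with `b + c` columns. -/
def colsL {a b c : ℕ} (M : Matrix (Fin a) (Fin (b + c)) ℂ) : Matrix (Fin a) (Fin b) ℂ :=
  M.submatrix id (Fin.castAdd c)

/-- The last `c` columns of a matrix with `b + c` columns. -/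
def colsR {a b c : ℕ} (M : Matrix (Fin a) (Fin (b + c)) ℂ) : Matrix (Fin a) (Fin c) ℂ :=
  M.submatrix id (Fin.natAdd b)

/-! Let `P` be the projection onto the range of the sketch. After `q` power iterations that range
contains the columns of `U₁ D + U₂ H`, where `D` holds the `k` leading singular values and `‖H‖` is
at most `σ k * γ ^ (2 * q) * ‖Ω₂ Ω₁†‖`. Applying `1 - P` to these columns bounds both residuals
`(A - P A) V₁` and `(A - P A)ᴴ U₁` by the same quantity, with no loss of a constant: on the left
side the growth of `‖A - P A‖` beyond `σ k` is exactly compensated by the sine of the angle between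
`U₁` and the sketch. By Eckart–Young the trailing singular values of `P A` do not exceed `σ k`, so
a `sin Θ` argument in the style of Wedin bounds the sine matrices multiplied by `D`, whose norms
control each other through the gap `1 - γ`. Multiplying by `D` weights the `j`-th direction by
`σ j`, and Courant–Fischer recovers the individual angles, each with its own factor `σ k / σ j`. -/

section BlockPerturbation

open scoped Matrix.Norms.L2Operator

variable {𝕜 : Type*} [RCLike 𝕜] {l m n p k k' a b a' b' r : Type*}
  [Fintype l] [Fintype m] [Fintype n] [Fintype k] [Fintype k'] [Fintype a] [Fintype b]
  [Fintype a'] [Fintype b'] [Fintype r]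

lemma le_div_one_sub_of_le_mul_add {x y γ ε : ℝ} (hγ : 0 ≤ γ) (hγ_lt : γ < 1)
    (hx : x ≤ γ * y + ε) (hy : y ≤ γ * x + ε) : x ≤ ε / (1 - γ) := by
  have hy' : γ * y ≤ γ * (γ * x + ε) := mul_le_mul_of_nonneg_left hy hγ
  rw [le_div_iff₀ (sub_pos.2 hγ_lt)]
  refine le_of_mul_le_mul_right ?_ (by linarith : 0 < 1 + γ)
  linarith

lemma l2_opNorm_mul_le_right [DecidableEq m] [DecidableEq n] {M : Matrix l m 𝕜}
    (hM : ‖M‖ ≤ 1) (N : Matrix m n 𝕜) : ‖M * N‖ ≤ ‖N‖ :=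
  (l2_opNorm_mul M N).trans (mul_le_of_le_one_left (norm_nonneg N) hM)

lemma l2_opNorm_one_le [DecidableEq n] : ‖(1 : Matrix n n 𝕜)‖ ≤ 1 :=
  (IsStarProjection.one (R := Matrix n n 𝕜)).norm_le

lemma l2_opNorm_le_one_of_conjTranspose_mul_self [DecidableEq n] {U : Matrix m n 𝕜}
    (hU : Uᴴ * U = 1) : ‖U‖ ≤ 1 := by
  refine (mul_self_le_mul_self_iff (norm_nonneg U) zero_le_one).2 ?_
  rw [← l2_opNorm_conjTranspose_mul_self, hU, one_mul]
  exact l2_opNorm_one_le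

lemma l2_opNorm_pow_le [DecidableEq n] (M : Matrix n n 𝕜) : ∀ q : ℕ, ‖M ^ q‖ ≤ ‖M‖ ^ q
  | 0 => by simpa using l2_opNorm_one_le
  | q + 1 => norm_pow_le' M q.succ_pos

lemma isStarProjection_mul_conjTranspose [DecidableEq n] {U : Matrix m n 𝕜}
    (hU : Uᴴ * U = 1) :
    IsStarProjection (U * Uᴴ) where
  isIdempotentElem := by
    rw [IsIdempotentElem, Matrix.mul_assoc, ← Matrix.mul_assoc Uᴴ, hU, Matrix.one_mul]
  isSelfAdjoint := by simp [IsSelfAdjoint, star_eq_conjTranspose]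

lemma l2_opNorm_one_sub_mul_le [DecidableEq m] [DecidableEq n] {P : Matrix m m 𝕜}
    (hP : IsStarProjection P) (M : Matrix m n 𝕜) : ‖(1 - P) * M‖ ≤ ‖M‖ :=
  l2_opNorm_mul_le_right hP.one_sub.norm_le M

lemma l2_opNorm_add_sq_le [DecidableEq k] [DecidableEq a] [DecidableEq n] {U₁ : Matrix m k 𝕜}
    {U₂ : Matrix m a 𝕜} (h₁ : U₁ᴴ * U₁ = 1) (h₂ : U₂ᴴ * U₂ = 1) (h₁₂ : U₁ᴴ * U₂ = 0)
    (M₁ : Matrix k n 𝕜) (M₂ : Matrix a n 𝕜) :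
    ‖U₁ * M₁ + U₂ * M₂‖ ^ 2 ≤ ‖M₁‖ ^ 2 + ‖M₂‖ ^ 2 := by
  have h₂₁ : U₂ᴴ * U₁ = 0 := by simpa using congrArg Matrix.conjTranspose h₁₂
  have gram : (U₁ * M₁ + U₂ * M₂)ᴴ * (U₁ * M₁ + U₂ * M₂) = M₁ᴴ * M₁ + M₂ᴴ * M₂ := by
    simp only [conjTranspose_add, conjTranspose_mul, Matrix.add_mul, Matrix.mul_add,
      Matrix.mul_assoc]
    simp [← Matrix.mul_assoc U₁ᴴ, ← Matrix.mul_assoc U₂ᴴ, h₁, h₂, h₁₂, h₂₁]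
  simp only [sq, ← l2_opNorm_conjTranspose_mul_self, gram]
  exact norm_add_le _ _

lemma one_sub_mul_eq_neg_of_mul_add [DecidableEq m] {P : Matrix m m 𝕜} {X Y : Matrix m p 𝕜}
    (hP : P * (X + Y) = X + Y) : (1 - P) * X = -((1 - P) * Y) := by
  rw [← add_eq_zero_iff_eq_neg, ← Matrix.mul_add, Matrix.sub_mul, Matrix.one_mul, hP, sub_self]

lemma l2_opNorm_one_sub_mul_sq_le [DecidableEq m] [DecidableEq k] [DecidableEq a]
    {P : Matrix m m 𝕜} (hP : IsStarProjection P) {U₁ : Matrix m k 𝕜} {U₂ : Matrix m a 𝕜}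
    (h₁ : U₁ᴴ * U₁ = 1) (h₂ : U₂ᴴ * U₂ = 1) (h₁₂ : U₁ᴴ * U₂ = 0) {F : Matrix a k 𝕜}
    (hPF : P * (U₁ + U₂ * F) = U₁ + U₂ * F) {f : ℝ} (hF : ‖F‖ ≤ f) :
    ‖(1 - P) * U₁‖ ^ 2 * (1 + f ^ 2) ≤ f ^ 2 := by
  -- The weight `c` minimises `(1 - c) ^ 2 + (c * f) ^ 2`.
  set c : ℝ := 1 / (1 + f ^ 2)
  have blend : (1 - P) * U₁ =
      (1 - P) * (U₁ * ((1 - c : ℝ) : 𝕜) • (1 : Matrix k k 𝕜) + U₂ * ((-c : ℝ) : 𝕜) • F) := by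
    have := one_sub_mul_eq_neg_of_mul_add hPF
    simp only [Matrix.mul_add, Matrix.mul_smul, Matrix.mul_one, this]
    push_cast
    module
  have hF_sq : ‖F‖ ^ 2 ≤ f ^ 2 := by gcongr
  have bound : ‖(1 - P) * U₁‖ ^ 2 ≤ (1 - c) ^ 2 + c ^ 2 * f ^ 2 := calc
    _ ≤ ‖U₁ * ((1 - c : ℝ) : 𝕜) • (1 : Matrix k k 𝕜) + U₂ * ((-c : ℝ) : 𝕜) • F‖ ^ 2 := by
      rw [blend]
      gcongr
      exact l2_opNorm_one_sub_mul_le hP _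
    _ ≤ ‖((1 - c : ℝ) : 𝕜) • (1 : Matrix k k 𝕜)‖ ^ 2 + ‖((-c : ℝ) : 𝕜) • F‖ ^ 2 :=
      l2_opNorm_add_sq_le h₁ h₂ h₁₂ _ _
    _ ≤ (1 - c) ^ 2 + c ^ 2 * f ^ 2 := by
      simp only [norm_smul, mul_pow, RCLike.norm_ofReal, sq_abs, neg_sq]
      gcongr
      exact mul_le_of_le_one_right (sq_nonneg _) (pow_le_one₀ (norm_nonneg _) l2_opNorm_one_le)
  refine (mul_le_mul_of_nonneg_right bound (by positivity)).trans_eq ?_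
  simp only [c]
  field_simp
  ring

/-- A splitting `A = U₁ D V₁ᴴ + U₂ S V₂ᴴ` along orthonormal columns `[U₁ U₂]` and `[V₁ V₂]`, as
obtained from a singular value decomposition by separating the leading singular values from the
trailing ones. The blocks `D` and `S` are not required to be diagonal. -/
structure IsSingularSplitting
    [DecidableEq k] [DecidableEq k'] [DecidableEq a] [DecidableEq b]
    (A : Matrix m n 𝕜) (U₁ : Matrix m k 𝕜) (D : Matrix k k' 𝕜) (V₁ : Matrix n k' 𝕜)
    (U₂ : Matrix m a 𝕜) (S : Matrix a b 𝕜) (V₂ : Matrix n b 𝕜) : Prop where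
  eq_add : A = U₁ * D * V₁ᴴ + U₂ * S * V₂ᴴ
  left₁ : U₁ᴴ * U₁ = 1
  left₂ : U₂ᴴ * U₂ = 1
  left₁₂ : U₁ᴴ * U₂ = 0
  right₁ : V₁ᴴ * V₁ = 1
  right₂ : V₂ᴴ * V₂ = 1
  right₁₂ : V₁ᴴ * V₂ = 0

namespace IsSingularSplitting

section Algebra

variable [DecidableEq k] [DecidableEq k'] [DecidableEq a] [DecidableEq b]
  {A : Matrix m n 𝕜} {U₁ : Matrix m k 𝕜} {D : Matrix k k' 𝕜} {V₁ : Matrix n k' 𝕜}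
  {U₂ : Matrix m a 𝕜} {S : Matrix a b 𝕜} {V₂ : Matrix n b 𝕜}

lemma conjTranspose (h : IsSingularSplitting A U₁ D V₁ U₂ S V₂) :
    IsSingularSplitting Aᴴ V₁ Dᴴ U₁ V₂ Sᴴ U₂ where
  eq_add := by simp [h.eq_add, Matrix.mul_assoc]
  left₁ := h.right₁
  left₂ := h.right₂
  left₁₂ := h.right₁₂
  right₁ := h.left₁
  right₂ := h.left₂
  right₁₂ := h.left₁₂

lemma left₂₁ (h : IsSingularSplitting A U₁ D V₁ U₂ S V₂) : U₂ᴴ * U₁ = 0 := by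
  simpa using congrArg Matrix.conjTranspose h.left₁₂

lemma swap (h : IsSingularSplitting A U₁ D V₁ U₂ S V₂) :
    IsSingularSplitting A U₂ S V₂ U₁ D V₁ where
  eq_add := h.eq_add.trans (add_comm _ _)
  left₁ := h.left₂
  left₂ := h.left₁
  left₁₂ := h.left₂₁
  right₁ := h.right₂
  right₂ := h.right₁
  right₁₂ := h.conjTranspose.left₂₁

lemma mul_right₁ (h : IsSingularSplitting A U₁ D V₁ U₂ S V₂) : A * V₁ = U₁ * D := by
  simp [h.eq_add, Matrix.add_mul, Matrix.mul_assoc, h.right₁, h.conjTranspose.left₂₁]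

lemma one_sub_mul_eq [DecidableEq m] (h : IsSingularSplitting A U₁ D V₁ U₂ S V₂) :
    (1 - U₁ * U₁ᴴ) * A = U₂ * S * V₂ᴴ := by
  have hU : U₁ᴴ * A = D * V₁ᴴ := by
    simpa using congrArg Matrix.conjTranspose h.conjTranspose.mul_right₁
  rw [Matrix.sub_mul, Matrix.one_mul, Matrix.mul_assoc, hU, ← Matrix.mul_assoc, sub_eq_iff_eq_add',
    ← h.eq_add]

lemma right₂_mul_one_sub [DecidableEq n] (h : IsSingularSplitting A U₁ D V₁ U₂ S V₂) :
    V₂ᴴ * (1 - V₁ * V₁ᴴ) = V₂ᴴ := by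
  rw [Matrix.mul_sub, Matrix.mul_one, ← Matrix.mul_assoc, h.conjTranspose.left₂₁, Matrix.zero_mul,
    sub_zero]

lemma power [DecidableEq m] (h : IsSingularSplitting A U₁ D V₁ U₂ S V₂) :
    ∀ q : ℕ, IsSingularSplitting ((A * Aᴴ) ^ q * A)
      U₁ (D * (Dᴴ * D) ^ q) V₁ U₂ (S * (Sᴴ * S) ^ q) V₂
  | 0 => by simpa using h
  | q + 1 =>
    { h with
      eq_add := by
        have hU₁ : Aᴴ * U₁ = V₁ * Dᴴ := h.conjTranspose.mul_right₁
        have hU₂ : Aᴴ * U₂ = V₂ * Sᴴ := h.conjTranspose.swap.mul_right₁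
        rw [pow_succ', Matrix.mul_assoc, (h.power q).eq_add]
        simp only [Matrix.mul_add, Matrix.mul_assoc, ← Matrix.mul_assoc Aᴴ, hU₁, hU₂]
        simp only [← Matrix.mul_assoc A, h.mul_right₁, h.swap.mul_right₁, pow_succ',
          Matrix.mul_assoc] }

end Algebra

section Wedin

variable [DecidableEq m] [DecidableEq n] [DecidableEq k] [DecidableEq a] [DecidableEq b]
  [DecidableEq a'] [DecidableEq b']
  {A A' : Matrix m n 𝕜} {U₁ U₁' : Matrix m k 𝕜} {D D' : Matrix k k 𝕜}
  {V₁ V₁' : Matrix n k 𝕜} {U₂ : Matrix m a 𝕜} {S : Matrix a b 𝕜} {V₂ : Matrix n b 𝕜}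
  {U₂' : Matrix m a' 𝕜} {S' : Matrix a' b' 𝕜} {V₂' : Matrix n b' 𝕜}

lemma l2_opNorm_sin_mul_le_add (h : IsSingularSplitting A U₁ D V₁ U₂ S V₂)
    (h' : IsSingularSplitting A' U₁' D' V₁' U₂' S' V₂') :
    ‖(1 - U₁' * U₁'ᴴ) * U₁ * D‖ ≤ ‖S'‖ * ‖(1 - V₁' * V₁'ᴴ) * V₁‖ + ‖(A - A') * V₁‖ := by
  have split : (1 - U₁' * U₁'ᴴ) * U₁ * D =
      U₂' * (S' * (V₂'ᴴ * ((1 - V₁' * V₁'ᴴ) * V₁))) + (1 - U₁' * U₁'ᴴ) * ((A - A') * V₁) := by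
    rw [Matrix.mul_assoc, ← h.mul_right₁, ← Matrix.mul_assoc V₂'ᴴ, h'.right₂_mul_one_sub,
      ← Matrix.mul_assoc S', ← Matrix.mul_assoc U₂', ← Matrix.mul_assoc U₂', ← h'.one_sub_mul_eq,
      Matrix.mul_assoc _ A', ← Matrix.mul_add, ← Matrix.add_mul, add_sub_cancel]
  have hU₂' := l2_opNorm_le_one_of_conjTranspose_mul_self h'.left₂
  have hV₂' : ‖V₂'ᴴ‖ ≤ 1 :=
    (l2_opNorm_conjTranspose V₂').trans_le (l2_opNorm_le_one_of_conjTranspose_mul_self h'.right₂)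
  rw [split]
  refine (norm_add_le _ _).trans (add_le_add ?_ ?_)
  · calc _ ≤ ‖S' * (V₂'ᴴ * ((1 - V₁' * V₁'ᴴ) * V₁))‖ := l2_opNorm_mul_le_right hU₂' _
      _ ≤ ‖S'‖ * ‖V₂'ᴴ * ((1 - V₁' * V₁'ᴴ) * V₁)‖ := l2_opNorm_mul _ _
      _ ≤ _ := by gcongr; exact l2_opNorm_mul_le_right hV₂' _
  · exact l2_opNorm_one_sub_mul_le (isStarProjection_mul_conjTranspose h'.left₁) _

/-- Wedin's `sin Θ` theorem, with the sines weighted by the leading singular values. -/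
theorem l2_opNorm_sin_mul_le_of_residual_le (h : IsSingularSplitting A U₁ D V₁ U₂ S V₂)
    (h' : IsSingularSplitting A' U₁' D' V₁' U₂' S' V₂') (hD : IsUnit D) {γ ε : ℝ}
    (hγ : ‖S'‖ * ‖D⁻¹‖ ≤ γ) (hγ_lt : γ < 1)
    (hV : ‖(A - A') * V₁‖ ≤ ε) (hU : ‖(A - A')ᴴ * U₁‖ ≤ ε) :
    ‖(1 - U₁' * U₁'ᴴ) * U₁ * D‖ ≤ ε / (1 - γ) ∧ ‖(1 - V₁' * V₁'ᴴ) * V₁ * Dᴴ‖ ≤ ε / (1 - γ) := by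
  set X := (1 - U₁' * U₁'ᴴ) * U₁
  set T := (1 - V₁' * V₁'ᴴ) * V₁
  have hD_inv : D * D⁻¹ = 1 := mul_nonsing_inv D ((isUnit_iff_isUnit_det D).1 hD)
  have hD_star : Dᴴ * D⁻¹ᴴ = 1 := by
    rw [← conjTranspose_mul, nonsing_inv_mul D ((isUnit_iff_isUnit_det D).1 hD), conjTranspose_one]
  have hXD : ‖X * D‖ ≤ ‖S'‖ * ‖T‖ + ε :=
    (h.l2_opNorm_sin_mul_le_add h').trans (by gcongr)
  have hTD : ‖T * Dᴴ‖ ≤ ‖S'‖ * ‖X‖ + ε := by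
    have := h.conjTranspose.l2_opNorm_sin_mul_le_add h'.conjTranspose
    rw [l2_opNorm_conjTranspose, ← conjTranspose_sub] at this
    exact this.trans (by gcongr)
  have hX : ‖X‖ ≤ ‖X * D‖ * ‖D⁻¹‖ := by
    simpa [Matrix.mul_assoc, hD_inv] using l2_opNorm_mul (X * D) D⁻¹
  have hT : ‖T‖ ≤ ‖T * Dᴴ‖ * ‖D⁻¹‖ := by
    simpa [Matrix.mul_assoc, hD_star, l2_opNorm_conjTranspose] using l2_opNorm_mul (T * Dᴴ) D⁻¹ᴴ
  have hS'X : ‖S'‖ * ‖X‖ ≤ γ * ‖X * D‖ := calc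
    _ ≤ ‖S'‖ * (‖X * D‖ * ‖D⁻¹‖) := by gcongr
    _ = ‖S'‖ * ‖D⁻¹‖ * ‖X * D‖ := by ring
    _ ≤ γ * ‖X * D‖ := by gcongr
  have hS'T : ‖S'‖ * ‖T‖ ≤ γ * ‖T * Dᴴ‖ := calc
    _ ≤ ‖S'‖ * (‖T * Dᴴ‖ * ‖D⁻¹‖) := by gcongr
    _ = ‖S'‖ * ‖D⁻¹‖ * ‖T * Dᴴ‖ := by ring
    _ ≤ γ * ‖T * Dᴴ‖ := by gcongr
  have hγ_nonneg : 0 ≤ γ := (mul_nonneg (norm_nonneg S') (norm_nonneg D⁻¹)).trans hγ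
  exact ⟨le_div_one_sub_of_le_mul_add hγ_nonneg hγ_lt (by linarith) (by linarith : ‖T * Dᴴ‖ ≤ _),
    le_div_one_sub_of_le_mul_add hγ_nonneg hγ_lt (by linarith) (by linarith : ‖X * D‖ ≤ _)⟩

end Wedin

section Projection

variable [DecidableEq m] [DecidableEq k] [DecidableEq a] [DecidableEq b]
  {A : Matrix m n 𝕜} {U₁ : Matrix m k 𝕜} {D : Matrix k k 𝕜} {V₁ : Matrix n k 𝕜}
  {U₂ : Matrix m a 𝕜} {S : Matrix a b 𝕜} {V₂ : Matrix n b 𝕜} {P : Matrix m m 𝕜} {H : Matrix a k 𝕜}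

lemma l2_opNorm_residual_mul_right_le (h : IsSingularSplitting A U₁ D V₁ U₂ S V₂)
    (hP : IsStarProjection P) (hPH : P * (U₁ * D + U₂ * H) = U₁ * D + U₂ * H) :
    ‖(1 - P) * A * V₁‖ ≤ ‖H‖ := by
  rw [Matrix.mul_assoc, h.mul_right₁, one_sub_mul_eq_neg_of_mul_add hPH, norm_neg]
  exact (l2_opNorm_one_sub_mul_le hP _).trans
    (l2_opNorm_mul_le_right (l2_opNorm_le_one_of_conjTranspose_mul_self h.left₂) H)

lemma l2_opNorm_residual_sq_le [DecidableEq n] (h : IsSingularSplitting A U₁ D V₁ U₂ S V₂)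
    (hP : IsStarProjection P) (hPH : P * (U₁ * D + U₂ * H) = U₁ * D + U₂ * H) :
    ‖(1 - P) * A‖ ^ 2 ≤ ‖S‖ ^ 2 + ‖H‖ ^ 2 := by
  have factor : (1 - P) * A = (1 - P) * (U₂ * (V₂ * Sᴴ + V₁ * -Hᴴ)ᴴ) := by
    rw [h.eq_add, Matrix.mul_add, ← Matrix.mul_assoc (1 - P), one_sub_mul_eq_neg_of_mul_add hPH]
    simp [Matrix.mul_add, Matrix.mul_assoc, add_comm]
  calc ‖(1 - P) * A‖ ^ 2 ≤ ‖V₂ * Sᴴ + V₁ * -Hᴴ‖ ^ 2 := by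
        rw [factor, ← l2_opNorm_conjTranspose (V₂ * Sᴴ + V₁ * -Hᴴ)]
        gcongr
        exact (l2_opNorm_one_sub_mul_le hP _).trans
          (l2_opNorm_mul_le_right (l2_opNorm_le_one_of_conjTranspose_mul_self h.left₂) _)
    _ ≤ ‖S‖ ^ 2 + ‖H‖ ^ 2 := by
        simpa [l2_opNorm_conjTranspose] using
          l2_opNorm_add_sq_le h.right₂ h.right₁ h.swap.right₁₂ Sᴴ (-Hᴴ)

lemma l2_opNorm_residual_mul_left_le (h : IsSingularSplitting A U₁ D V₁ U₂ S V₂)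
    (hP : IsStarProjection P) (hPH : P * (U₁ * D + U₂ * H) = U₁ * D + U₂ * H) (hD : IsUnit D)
    {s g : ℝ} (hS : ‖S‖ ≤ s) (hsD : s * ‖D⁻¹‖ ≤ 1) (hg : 0 ≤ g) (hH : ‖H‖ ≤ s * g) :
    ‖((1 - P) * A)ᴴ * U₁‖ ≤ s * g := by
  classical
  have hs : 0 ≤ s := (norm_nonneg S).trans hS
  have hF : ‖H * D⁻¹‖ ≤ g := calc
    ‖H * D⁻¹‖ ≤ ‖H‖ * ‖D⁻¹‖ := l2_opNorm_mul _ _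
    _ ≤ s * g * ‖D⁻¹‖ := by gcongr
    _ = g * (s * ‖D⁻¹‖) := by ring
    _ ≤ g := mul_le_of_le_one_right hg hsD
  have hPF : P * (U₁ + U₂ * (H * D⁻¹)) = U₁ + U₂ * (H * D⁻¹) := by
    have := congrArg (· * D⁻¹) hPH
    simpa [Matrix.mul_assoc, Matrix.add_mul,
      mul_nonsing_inv D ((isUnit_iff_isUnit_det D).1 hD)] using this
  have hU : ‖(1 - P) * U₁‖ ^ 2 * (1 + g ^ 2) ≤ g ^ 2 :=
    l2_opNorm_one_sub_mul_sq_le hP h.left₁ h.left₂ h.left₁₂ hPF hF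
  have hA : ‖(1 - P) * A‖ ^ 2 ≤ s ^ 2 * (1 + g ^ 2) := calc
    _ ≤ ‖S‖ ^ 2 + ‖H‖ ^ 2 := h.l2_opNorm_residual_sq_le hP hPH
    _ ≤ s ^ 2 + (s * g) ^ 2 := by gcongr
    _ = s ^ 2 * (1 + g ^ 2) := by ring
  have factor : ((1 - P) * A)ᴴ * U₁ = ((1 - P) * A)ᴴ * ((1 - P) * U₁) := by
    rw [conjTranspose_mul, ← star_eq_conjTranspose (1 - P), hP.one_sub.isSelfAdjoint.star_eq,
      Matrix.mul_assoc, Matrix.mul_assoc, ← Matrix.mul_assoc (1 - P) (1 - P),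
      hP.one_sub.isIdempotentElem.eq]
  rw [factor]
  refine (l2_opNorm_mul _ _).trans (abs_le_of_sq_le_sq' ?_ (by positivity)).2
  rw [l2_opNorm_conjTranspose]
  calc (‖(1 - P) * A‖ * ‖(1 - P) * U₁‖) ^ 2
      = ‖(1 - P) * A‖ ^ 2 * ‖(1 - P) * U₁‖ ^ 2 := mul_pow _ _ 2
    _ ≤ s ^ 2 * (1 + g ^ 2) * ‖(1 - P) * U₁‖ ^ 2 := by gcongr
    _ = s ^ 2 * (‖(1 - P) * U₁‖ ^ 2 * (1 + g ^ 2)) := by ring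
    _ ≤ s ^ 2 * g ^ 2 := by gcongr
    _ = (s * g) ^ 2 := (mul_pow s g 2).symm

end Projection

section Truncation

variable [DecidableEq m] [DecidableEq n] [DecidableEq k] [DecidableEq k'] [DecidableEq a]
  [DecidableEq b] {A : Matrix m n 𝕜} {U₁ : Matrix m k 𝕜} {D : Matrix k k' 𝕜}
  {V₁ : Matrix n k' 𝕜} {U₂ : Matrix m a 𝕜} {S : Matrix a b 𝕜} {V₂ : Matrix n b 𝕜}

lemma l2_opNorm_mul_sub_mul_le (h : IsSingularSplitting A U₁ D V₁ U₂ S V₂) {P : Matrix l m 𝕜}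
    (hP : ‖P‖ ≤ 1) : ‖P * A - P * (U₁ * D) * V₁ᴴ‖ ≤ ‖S‖ := by
  have hV₂ : ‖V₂ᴴ‖ ≤ 1 :=
    (l2_opNorm_conjTranspose V₂).trans_le (l2_opNorm_le_one_of_conjTranspose_mul_self h.right₂)
  rw [Matrix.mul_assoc, ← Matrix.mul_sub, h.eq_add, add_sub_cancel_left, Matrix.mul_assoc]
  calc ‖P * (U₂ * (S * V₂ᴴ))‖ ≤ ‖U₂ * (S * V₂ᴴ)‖ := l2_opNorm_mul_le_right hP _
    _ ≤ ‖S * V₂ᴴ‖ :=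
      l2_opNorm_mul_le_right (l2_opNorm_le_one_of_conjTranspose_mul_self h.left₂) _
    _ ≤ ‖S‖ := (l2_opNorm_mul S V₂ᴴ).trans (mul_le_of_le_one_right (norm_nonneg S) hV₂)

end Truncation

section PowerIteration

variable [DecidableEq m] [DecidableEq k] [DecidableEq a] [DecidableEq b]
  {A : Matrix m n 𝕜} {U₁ : Matrix m k 𝕜} {D : Matrix k k 𝕜} {V₁ : Matrix n k 𝕜}
  {U₂ : Matrix m a 𝕜} {S : Matrix a b 𝕜} {V₂ : Matrix n b 𝕜}
  {Ω : Matrix n r 𝕜} {K : Matrix r k 𝕜}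

lemma exists_power_mul_eq_add (h : IsSingularSplitting A U₁ D V₁ U₂ S V₂) (hD : IsUnit D)
    (hK : V₁ᴴ * Ω * K = 1) {s γ : ℝ} (hS : ‖S‖ ≤ s) (hγ : s * ‖D⁻¹‖ ≤ γ) (q : ℕ) :
    ∃ (C : Matrix r k 𝕜) (H : Matrix a k 𝕜),
      (A * Aᴴ) ^ q * A * Ω * C = U₁ * D + U₂ * H ∧
        ‖H‖ ≤ s * (γ ^ (2 * q) * ‖V₂ᴴ * Ω * K‖) := by
  have hdet := (isUnit_iff_isUnit_det D).1 hD
  have hinv : (Dᴴ * D) * (D⁻¹ * D⁻¹ᴴ) = 1 := by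
    rw [Matrix.mul_assoc, ← Matrix.mul_assoc D, mul_nonsing_inv D hdet, Matrix.one_mul,
      ← conjTranspose_mul, nonsing_inv_mul D hdet, conjTranspose_one]
  have hinv_pow : (Dᴴ * D) ^ q * (D⁻¹ * D⁻¹ᴴ) ^ q = 1 :=
    pow_mul_pow_eq_one q hinv
  refine ⟨K * (D⁻¹ * D⁻¹ᴴ) ^ q, S * (Sᴴ * S) ^ q * (V₂ᴴ * Ω * K) * (D⁻¹ * D⁻¹ᴴ) ^ q, ?_, ?_⟩
  · have hlead : (Dᴴ * D) ^ q * (V₁ᴴ * Ω * K * (D⁻¹ * D⁻¹ᴴ) ^ q) = 1 := by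
      rw [hK, Matrix.one_mul, hinv_pow]
    rw [(h.power q).eq_add]
    simp only [Matrix.add_mul, Matrix.mul_assoc] at hlead ⊢
    rw [hlead, Matrix.mul_one]
  · have hs : 0 ≤ s := (norm_nonneg S).trans hS
    have hSS : ‖Sᴴ * S‖ ≤ s ^ 2 := by
      rw [l2_opNorm_conjTranspose_mul_self, sq]
      gcongr
    have hDD : ‖D⁻¹ * D⁻¹ᴴ‖ ≤ ‖D⁻¹‖ ^ 2 := by
      simpa [l2_opNorm_conjTranspose, sq] using l2_opNorm_mul D⁻¹ D⁻¹ᴴ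
    calc ‖S * (Sᴴ * S) ^ q * (V₂ᴴ * Ω * K) * (D⁻¹ * D⁻¹ᴴ) ^ q‖
        ≤ ‖S‖ * ‖(Sᴴ * S) ^ q‖ * ‖V₂ᴴ * Ω * K‖ * ‖(D⁻¹ * D⁻¹ᴴ) ^ q‖ := by
          iterate 2 refine (l2_opNorm_mul _ _).trans (mul_le_mul_of_nonneg_right ?_ (norm_nonneg _))
          exact l2_opNorm_mul _ _
      _ ≤ s * (s ^ 2) ^ q * ‖V₂ᴴ * Ω * K‖ * (‖D⁻¹‖ ^ 2) ^ q := by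
          gcongr
          · exact (l2_opNorm_pow_le _ q).trans (by gcongr)
          · exact (l2_opNorm_pow_le _ q).trans (by gcongr)
      _ = s * ((s * ‖D⁻¹‖) ^ (2 * q) * ‖V₂ᴴ * Ω * K‖) := by ring
      _ ≤ s * (γ ^ (2 * q) * ‖V₂ᴴ * Ω * K‖) := by gcongr

theorem l2_opNorm_sin_mul_le_of_power_iteration [DecidableEq n] [DecidableEq a'] [DecidableEq b']
    (h : IsSingularSplitting A U₁ D V₁ U₂ S V₂) {P : Matrix m m 𝕜} (hP : IsStarProjection P)
    {U₁' : Matrix m k 𝕜} {D' : Matrix k k 𝕜} {V₁' : Matrix n k 𝕜} {U₂' : Matrix m a' 𝕜}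
    {S' : Matrix a' b' 𝕜} {V₂' : Matrix n b' 𝕜}
    (h' : IsSingularSplitting (P * A) U₁' D' V₁' U₂' S' V₂') (hD : IsUnit D)
    (hK : V₁ᴴ * Ω * K = 1) {q : ℕ}
    (hPΩ : P * ((A * Aᴴ) ^ q * A * Ω) = (A * Aᴴ) ^ q * A * Ω)
    {s γ : ℝ} (hS : ‖S‖ ≤ s) (hS' : ‖S'‖ ≤ s) (hγ : s * ‖D⁻¹‖ ≤ γ) (hγ_lt : γ < 1) :
    ‖(1 - U₁' * U₁'ᴴ) * U₁ * D‖ ≤ s * (γ ^ (2 * q) * ‖V₂ᴴ * Ω * K‖) / (1 - γ) ∧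
      ‖(1 - V₁' * V₁'ᴴ) * V₁ * Dᴴ‖ ≤ s * (γ ^ (2 * q) * ‖V₂ᴴ * Ω * K‖) / (1 - γ) := by
  obtain ⟨C, H, hCH, hH⟩ := h.exists_power_mul_eq_add hD hK hS hγ q
  have hPH : P * (U₁ * D + U₂ * H) = U₁ * D + U₂ * H := by
    rw [← hCH, ← Matrix.mul_assoc P, hPΩ]
  have residual : A - P * A = (1 - P) * A := by rw [Matrix.sub_mul, Matrix.one_mul]
  refine h.l2_opNorm_sin_mul_le_of_residual_le h' hD (le_trans (by gcongr) hγ) hγ_lt ?_ ?_ <;>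
    rw [residual]
  · exact (h.l2_opNorm_residual_mul_right_le hP hPH).trans hH
  · refine h.l2_opNorm_residual_mul_left_le hP hPH hD hS (hγ.trans hγ_lt.le) ?_ hH
    exact mul_nonneg (Even.pow_nonneg (even_two_mul q) γ) (norm_nonneg _)

end PowerIteration

end IsSingularSplitting

end BlockPerturbation

section SingularValues

open scoped Matrix.Norms.L2Operator

lemma norm_toLp_mulVec_sq {𝕜 m n : Type*} [RCLike 𝕜] [Fintype m] [Fintype n] (M : Matrix m n 𝕜)
    (x : n → 𝕜) : ‖WithLp.toLp 2 (M *ᵥ x)‖ ^ 2 = RCLike.re (star x ⬝ᵥ (Mᴴ * M) *ᵥ x) := by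
  rw [← inner_self_eq_norm_sq (𝕜 := 𝕜), EuclideanSpace.inner_toLp_toLp, dotProduct_comm,
    star_mulVec, ← dotProduct_mulVec, mulVec_mulVec]

lemma norm_toLp_mulVec_eq_of_conjTranspose_mul_self_eq {𝕜 l m n : Type*} [RCLike 𝕜] [Fintype l]
    [Fintype m] [Fintype n] {M : Matrix l n 𝕜} {N : Matrix m n 𝕜} (h : Mᴴ * M = Nᴴ * N)
    (x : n → 𝕜) : ‖WithLp.toLp 2 (M *ᵥ x)‖ = ‖WithLp.toLp 2 (N *ᵥ x)‖ := by
  rw [← sq_eq_sq₀ (norm_nonneg _) (norm_nonneg _), norm_toLp_mulVec_sq, norm_toLp_mulVec_sq, h]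

lemma norm_toLp_mulVec_of_conjTranspose_mul_self {𝕜 m n : Type*} [RCLike 𝕜]
    [Fintype m] [Fintype n] [DecidableEq n] {U : Matrix m n 𝕜} (hU : Uᴴ * U = 1)
    (x : n → 𝕜) : ‖WithLp.toLp 2 (U *ᵥ x)‖ = ‖WithLp.toLp 2 x‖ := by
  have hU' : Uᴴ * U = (1 : Matrix n n 𝕜)ᴴ * 1 := by simpa using hU
  simpa using norm_toLp_mulVec_eq_of_conjTranspose_mul_self_eq hU' x

lemma norm_toLp_mulVec_le {𝕜 m n : Type*} [RCLike 𝕜] [Fintype m] [Fintype n] [DecidableEq n]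
    (M : Matrix m n 𝕜) (x : n → 𝕜) :
    ‖WithLp.toLp 2 (M *ᵥ x)‖ ≤ ‖M‖ * ‖WithLp.toLp 2 x‖ :=
  l2_opNorm_mulVec M (WithLp.toLp 2 x)

lemma mul_norm_le_norm_diagonal_mulVec {𝕜 ι : Type*} [RCLike 𝕜] [Fintype ι] [LinearOrder ι]
    {τ : ι → ℝ} (hτ : Antitone τ) (hτ_nonneg : ∀ i, 0 ≤ τ i) {i : ι} {y : ι → 𝕜}
    (hy : ∀ t, i < t → y t = 0) :
    τ i * ‖WithLp.toLp 2 y‖ ≤ ‖WithLp.toLp 2 (diagonal (fun t => (τ t : 𝕜)) *ᵥ y)‖ := by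
  refine (abs_le_of_sq_le_sq' ?_ (norm_nonneg _)).2
  rw [mul_pow, EuclideanSpace.norm_sq_eq, EuclideanSpace.norm_sq_eq, Finset.mul_sum]
  refine Finset.sum_le_sum fun t _ => ?_
  simp only [mulVec_diagonal, norm_mul, RCLike.norm_ofReal, mul_pow, sq_abs]
  rcases le_or_gt t i with hti | hit
  · have := hτ hti
    have := hτ_nonneg i
    gcongr
  · simp [hy t hit]

lemma finrank_subtype_lt_fun {K : Type*} [Field K] {n : ℕ} (i : Fin n) :
    Module.finrank K ({t : Fin n // i < t} → K) = n - 1 - i := by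
  rw [Module.finrank_fintype_fun_eq_card, Fintype.card_subtype,
    Finset.filter_lt_eq_Ioi, Fin.card_Ioi]

lemma exists_ne_zero_of_finrank_le {K E : Type*} [Field K] [AddCommGroup E] [Module K E]
    [FiniteDimensional K E] {n : ℕ} (L : (Fin n → K) →ₗ[K] E) {i : Fin n}
    (hi : Module.finrank K E ≤ i) : ∃ y ≠ 0, L y = 0 ∧ ∀ t, i < t → y t = 0 := by
  let F := L.prod (LinearMap.funLeft K K (Subtype.val : {t : Fin n // i < t} → Fin n))
  obtain ⟨y, hyF, hy⟩ := (LinearMap.ker F).exists_mem_ne_zero_of_ne_bot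
    (F.ker_ne_bot_of_finrank_lt (by
      rw [Module.finrank_prod, finrank_subtype_lt_fun, Module.finrank_fin_fun]
      omega))
  exact ⟨y, hy, congrArg Prod.fst (LinearMap.mem_ker.1 hyF), fun t ht =>
    congrFun (congrArg Prod.snd (LinearMap.mem_ker.1 hyF)) ⟨t, ht⟩⟩

/-- One half of the Courant–Fischer principle. -/
lemma le_of_forall_ker_norm_mulVec_le {𝕜 l : Type*} [RCLike 𝕜] [Fintype l] {n : ℕ}
    {N : Matrix l (Fin n) 𝕜} {τ : Fin n → ℝ} (hτ : Antitone τ) (hτ_nonneg : ∀ i, 0 ≤ τ i)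
    (hN : Nᴴ * N = (diagonal fun t => (τ t : 𝕜))ᴴ * diagonal fun t => (τ t : 𝕜)) {E : Type*}
    [AddCommGroup E] [Module 𝕜 E] [FiniteDimensional 𝕜 E] (L : (Fin n → 𝕜) →ₗ[𝕜] E) {i : Fin n}
    (hi : Module.finrank 𝕜 E ≤ i) {c : ℝ}
    (h : ∀ x, L x = 0 → ‖WithLp.toLp 2 (N *ᵥ x)‖ ≤ c * ‖WithLp.toLp 2 x‖) : τ i ≤ c := by
  obtain ⟨y, hy_ne, hLy, hy⟩ := exists_ne_zero_of_finrank_le L hi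
  have hy_pos : 0 < ‖WithLp.toLp 2 y‖ := norm_pos_iff.2 (by simpa using hy_ne)
  refine le_of_mul_le_mul_right ?_ hy_pos
  calc τ i * ‖WithLp.toLp 2 y‖ ≤ ‖WithLp.toLp 2 (diagonal (fun t => (τ t : 𝕜)) *ᵥ y)‖ :=
        mul_norm_le_norm_diagonal_mulVec hτ hτ_nonneg hy
    _ = ‖WithLp.toLp 2 (N *ᵥ y)‖ := (norm_toLp_mulVec_eq_of_conjTranspose_mul_self_eq hN y).symm
    _ ≤ c * ‖WithLp.toLp 2 y‖ := h y hLy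

/-- One half of the Eckart–Young theorem. -/
lemma le_l2_opNorm_sub_mul {𝕜 l m : Type*} [RCLike 𝕜] [Fintype l] [Fintype m] [DecidableEq m]
    {n k : ℕ} {A : Matrix l m 𝕜} {V : Matrix m (Fin n) 𝕜} (hV : Vᴴ * V = 1)
    {τ : Fin n → ℝ} (hτ : Antitone τ) (hτ_nonneg : ∀ i, 0 ≤ τ i)
    (hAV : (A * V)ᴴ * (A * V) = (diagonal fun t => (τ t : 𝕜))ᴴ * diagonal fun t => (τ t : 𝕜))
    (X : Matrix l (Fin k) 𝕜) (Y : Matrix (Fin k) m 𝕜) {i : Fin n} (hi : k ≤ i) :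
    τ i ≤ ‖A - X * Y‖ := by
  refine le_of_forall_ker_norm_mulVec_le hτ hτ_nonneg hAV (Y * V).mulVecLin (by simpa using hi)
    fun x hx => ?_
  have hYV : (Y * V) *ᵥ x = 0 := hx
  have hx' : (A * V) *ᵥ x = (A - X * Y) *ᵥ (V *ᵥ x) := by
    rw [mulVec_mulVec, Matrix.sub_mul, sub_mulVec, Matrix.mul_assoc X, ← mulVec_mulVec x X, hYV,
      mulVec_zero, sub_zero]
  rw [hx', ← norm_toLp_mulVec_of_conjTranspose_mul_self hV x]
  exact norm_toLp_mulVec_le _ _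

section Sval

variable {m n : ℕ}

lemma exists_antitone_eigenvalues_comp_and_sval_eq (M : Matrix (Fin m) (Fin n) ℂ) :
    ∃ e : Fin n ≃ Fin n, Antitone ((isHermitian_conjTranspose_mul_self M).eigenvalues ∘ e) ∧
      ∀ i : Fin n, sval M i = √((isHermitian_conjTranspose_mul_self M).eigenvalues (e i)) := by
  set H := isHermitian_conjTranspose_mul_self M
  let e : Fin n ≃ Fin n := (finCongr (Fintype.card_fin n).symm).trans
    (Fintype.equivOfCardEq (Fintype.card_fin _))
  have he : Antitone (H.eigenvalues ∘ e) := fun i j hij => by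
    simpa [IsHermitian.eigenvalues, e] using H.eigenvalues₀_antitone (by simpa using hij)
  have hsort : List.insertionSort (· ≥ ·) ((List.ofFn H.eigenvalues).map Real.sqrt) =
      List.ofFn (Real.sqrt ∘ H.eigenvalues ∘ e) := by
    refine List.Perm.eq_of_pairwise' (r := (· ≥ ·)) (List.pairwise_insertionSort _ _) ?_ ?_
    · exact List.pairwise_ofFn.2 fun i j hij => Real.sqrt_le_sqrt (he hij.le)
    · rw [List.map_ofFn]
      exact (List.perm_insertionSort _ _).trans
        (Equiv.Perm.ofFn_comp_perm e (Real.sqrt ∘ H.eigenvalues)).symm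
  refine ⟨e, he, fun i => ?_⟩
  rw [sval, hsort]
  simp [List.getD_eq_getElem?_getD]

lemma sval_nonneg (M : Matrix (Fin m) (Fin n) ℂ) (i : Fin n) : 0 ≤ sval M i := by
  obtain ⟨e, -, hsval⟩ := exists_antitone_eigenvalues_comp_and_sval_eq M
  exact (hsval i).symm ▸ Real.sqrt_nonneg _

lemma sval_antitone (M : Matrix (Fin m) (Fin n) ℂ) : Antitone fun i : Fin n => sval M i := by
  obtain ⟨e, he, hsval⟩ := exists_antitone_eigenvalues_comp_and_sval_eq M
  intro i j hij
  simpa only [hsval, Function.comp_apply] using Real.sqrt_le_sqrt (he hij)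

open scoped ComplexOrder in
lemma exists_mul_gram_eq_diagonal_sval (M : Matrix (Fin m) (Fin n) ℂ) :
    ∃ W : Matrix (Fin n) (Fin n) ℂ, Wᴴ * W = 1 ∧ (M * W)ᴴ * (M * W) =
      (diagonal fun i : Fin n => (sval M i : ℂ))ᴴ * diagonal fun i : Fin n => (sval M i : ℂ) := by
  obtain ⟨e, -, hsval⟩ := exists_antitone_eigenvalues_comp_and_sval_eq M
  set H := isHermitian_conjTranspose_mul_self M
  set W₀ : Matrix (Fin n) (Fin n) ℂ := H.eigenvectorUnitary.val
  have hW₀ : W₀ᴴ * W₀ = 1 := Unitary.coe_star_mul_self H.eigenvectorUnitary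
  have hdiag : (M * W₀)ᴴ * (M * W₀) = diagonal (RCLike.ofReal ∘ H.eigenvalues) := by
    have := H.conjStarAlgAut_star_eigenvectorUnitary
    simpa [Unitary.conjStarAlgAut_apply, star_eq_conjTranspose, Matrix.mul_assoc] using this
  have hsval_sq (i : Fin n) : (sval M i : ℂ) * sval M i = H.eigenvalues (e i) := by
    rw [hsval, ← Complex.ofReal_mul,
      Real.mul_self_sqrt ((posSemidef_conjTranspose_mul_self M).eigenvalues_nonneg _)]
  refine ⟨W₀.submatrix id e, ?_, ?_⟩
  · rw [conjTranspose_submatrix, ← submatrix_mul _ _ _ _ _ Function.bijective_id, hW₀,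
      submatrix_one_equiv]
  · rw [show M * W₀.submatrix id e = (M * W₀).submatrix id e from rfl, conjTranspose_submatrix,
      ← submatrix_mul _ _ _ _ _ Function.bijective_id, hdiag, submatrix_diagonal_equiv,
      diagonal_conjTranspose, diagonal_mul_diagonal]
    congr 1
    ext i
    simp [hsval_sq]

lemma sval_le_of_forall_ker_norm_mulVec_le {M : Matrix (Fin m) (Fin n) ℂ} {E : Type*}
    [AddCommGroup E] [Module ℂ E] [FiniteDimensional ℂ E] (L : (Fin n → ℂ) →ₗ[ℂ] E) {i : Fin n}
    (hi : Module.finrank ℂ E ≤ i) {c : ℝ}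
    (h : ∀ x, L x = 0 → ‖WithLp.toLp 2 (M *ᵥ x)‖ ≤ c * ‖WithLp.toLp 2 x‖) : sval M i ≤ c := by
  obtain ⟨W, hW, hMW⟩ := exists_mul_gram_eq_diagonal_sval M
  refine le_of_forall_ker_norm_mulVec_le (sval_antitone M) (sval_nonneg M) hMW
    (L ∘ₗ W.mulVecLin) hi fun x hx => ?_
  rw [← mulVec_mulVec, ← norm_toLp_mulVec_of_conjTranspose_mul_self hW x]
  exact h (W *ᵥ x) hx

lemma l2_opNorm_le_sval_zero [NeZero n] (M : Matrix (Fin m) (Fin n) ℂ) : ‖M‖ ≤ sval M 0 := by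
  obtain ⟨W, hW, hMW⟩ := exists_mul_gram_eq_diagonal_sval M
  have hW_star : ‖Wᴴ‖ ≤ 1 :=
    (l2_opNorm_conjTranspose W).trans_le (l2_opNorm_le_one_of_conjTranspose_mul_self hW)
  have hM : M = M * W * Wᴴ := by
    rw [Matrix.mul_assoc, mul_eq_one_comm.1 hW, Matrix.mul_one]
  have hMW_norm : ‖M * W‖ = ‖diagonal fun i : Fin n => (sval M i : ℂ)‖ := by
    rw [← mul_self_inj (norm_nonneg _) (norm_nonneg _), ← l2_opNorm_conjTranspose_mul_self, hMW,
      l2_opNorm_conjTranspose_mul_self]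
  have hsval_zero : 0 ≤ sval M 0 := by simpa using sval_nonneg M 0
  calc ‖M‖ = ‖M * W * Wᴴ‖ := congrArg norm hM
    _ ≤ ‖M * W‖ := (l2_opNorm_mul _ _).trans (mul_le_of_le_one_right (norm_nonneg _) hW_star)
    _ ≤ sval M 0 := by
      rw [hMW_norm, l2_opNorm_diagonal]
      refine (pi_norm_le_iff_of_nonneg hsval_zero).2 fun i => ?_
      simpa [abs_of_nonneg (sval_nonneg M i)] using sval_antitone M (Fin.zero_le i)

/-- `sval M (n - 1 - j)` is the `j`-th smallest singular value, counted from `0`. -/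
lemma sval_le_l2_opNorm_mul_diagonal_div {M : Matrix (Fin m) (Fin n) ℂ} {σ : Fin n → ℝ}
    (hσ : Antitone σ) (hσ_pos : ∀ i, 0 < σ i) (j : Fin n) :
    sval M (n - 1 - j) ≤ ‖M * diagonal fun i => (σ i : ℂ)‖ / σ j := by
  refine sval_le_of_forall_ker_norm_mulVec_le (i := ⟨n - 1 - j, by omega⟩)
    (LinearMap.funLeft ℂ ℂ (Subtype.val : {t : Fin n // j < t} → Fin n))
    (finrank_subtype_lt_fun j).le fun x hx => ?_
  set y : Fin n → ℂ := fun i => x i / σ i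
  have hxy : x = diagonal (fun i => (σ i : ℂ)) *ᵥ y := by
    ext i
    have : (σ i : ℂ) ≠ 0 := by exact_mod_cast (hσ_pos i).ne'
    simp [y, mulVec_diagonal, mul_div_cancel₀, this]
  have hy (t : Fin n) (ht : j < t) : y t = 0 := by
    have : x t = 0 := congrFun hx ⟨t, ht⟩
    simp [y, this]
  have hyx : σ j * ‖WithLp.toLp 2 y‖ ≤ ‖WithLp.toLp 2 x‖ :=
    hxy ▸ mul_norm_le_norm_diagonal_mulVec hσ (fun i => (hσ_pos i).le) hy
  calc ‖WithLp.toLp 2 (M *ᵥ x)‖ = ‖WithLp.toLp 2 ((M * diagonal fun i => (σ i : ℂ)) *ᵥ y)‖ := by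
        rw [← mulVec_mulVec, ← hxy]
    _ ≤ ‖M * diagonal fun i => (σ i : ℂ)‖ * ‖WithLp.toLp 2 y‖ := norm_toLp_mulVec_le _ _
    _ ≤ ‖M * diagonal fun i => (σ i : ℂ)‖ * (‖WithLp.toLp 2 x‖ / σ j) := by
        gcongr
        rwa [le_div_iff₀' (hσ_pos j)]
    _ = _ := by ring

end Sval

end SingularValues

section BlockDecomposition

open scoped Matrix.Norms.L2Operator

lemma mul_diagRect_mul_conjTranspose {m n k a b : ℕ} (σ : ℕ → ℝ)
    (U : Matrix (Fin m) (Fin (k + a)) ℂ) (V : Matrix (Fin n) (Fin (k + b)) ℂ) :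
    U * diagRect σ 0 (k + a) (k + b) * Vᴴ =
      colsL U * diagRect σ 0 k k * (colsL V)ᴴ + colsR U * diagRect σ k a b * (colsR V)ᴴ := by
  ext i j
  have hL (x : Fin k) (y : Fin b) : (x : ℕ) ≠ k + y := by omega
  have hR (x : Fin a) (y : Fin k) : k + (x : ℕ) ≠ y := by omega
  simp [Matrix.mul_apply, Fin.sum_univ_add, diagRect, colsL, colsR, hL, hR]

lemma diagRect_self (σ : ℕ → ℝ) (k : ℕ) :
    diagRect σ 0 k k = diagonal fun i : Fin k => (σ i : ℂ) := by
  ext i j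
  simp [diagRect, diagonal_apply, Fin.ext_iff]

lemma diagRect_conjTranspose_mul_self (σ : ℕ → ℝ) (off a b : ℕ) :
    (diagRect σ off a b)ᴴ * diagRect σ off a b =
      diagonal fun j : Fin b => if (j : ℕ) < a then (σ (off + j) : ℂ) ^ 2 else 0 := by
  ext i j
  simp only [Matrix.mul_apply, conjTranspose_apply, diagRect, of_apply, diagonal_apply]
  rw [Fin.sum_univ_eq_sum_range (fun x => star (if x = (i : ℕ) then (σ (off + x) : ℂ) else 0) *
    if x = (j : ℕ) then (σ (off + x) : ℂ) else 0)]
  by_cases hij : i = j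
  · simp +contextual [hij, apply_ite, sq]
  · simp [hij, Ne.symm hij, Fin.val_inj, apply_ite]

lemma l2_opNorm_diagRect_le {σ : ℕ → ℝ} {off a b : ℕ} {c : ℝ} (hc : 0 ≤ c)
    (h : ∀ i < a, |σ (off + i)| ≤ c) : ‖diagRect σ off a b‖ ≤ c := by
  refine (mul_self_le_mul_self_iff (norm_nonneg _) hc).2 ?_
  rw [← l2_opNorm_conjTranspose_mul_self, diagRect_conjTranspose_mul_self, l2_opNorm_diagonal]
  refine (pi_norm_le_iff_of_nonneg (mul_self_nonneg c)).2 fun j => ?_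
  split_ifs with hj
  · rw [norm_pow, Complex.norm_real, Real.norm_eq_abs, ← sq]
    exact pow_le_pow_left₀ (abs_nonneg _) (h j hj) 2
  · simpa using mul_self_nonneg c

lemma isUnit_diagonal_ofReal {𝕜 ι : Type*} [RCLike 𝕜] [Fintype ι] [DecidableEq ι] {σ : ι → ℝ}
    (hσ : ∀ i, 0 < σ i) : IsUnit (diagonal fun i => (σ i : 𝕜)) := by
  refine isUnit_diagonal.2 (Pi.isUnit_iff.2 fun i => ?_)
  exact isUnit_iff_ne_zero.2 (by exact_mod_cast (hσ i).ne')

lemma l2_opNorm_inv_diagonal_le {𝕜 ι : Type*} [RCLike 𝕜] [Fintype ι] [DecidableEq ι]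
    {σ : ι → ℝ} {c : ℝ} (hc : 0 < c) (hσ : ∀ i, c ≤ σ i) :
    ‖(diagonal fun i => (σ i : 𝕜))⁻¹‖ ≤ c⁻¹ := by
  have hinv : (diagonal fun i => (σ i : 𝕜))⁻¹ = diagonal fun i => (σ i : 𝕜)⁻¹ := by
    refine inv_eq_right_inv ?_
    rw [diagonal_mul_diagonal, ← diagonal_one]
    congr 1
    ext i
    exact mul_inv_cancel₀ (by exact_mod_cast (hc.trans_le (hσ i)).ne')
  rw [hinv, l2_opNorm_diagonal]
  refine (pi_norm_le_iff_of_nonneg (inv_nonneg.2 hc.le)).2 fun i => ?_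
  rw [norm_inv, RCLike.norm_ofReal, abs_of_nonneg (hc.le.trans (hσ i))]
  exact inv_anti₀ hc (hσ i)

lemma colsL_conjTranspose_mul_colsL {a b c : ℕ} {M : Matrix (Fin a) (Fin (b + c)) ℂ}
    (h : Mᴴ * M = 1) : (colsL M)ᴴ * colsL M = 1 := by
  rw [colsL, conjTranspose_submatrix, ← submatrix_mul _ _ _ _ _ Function.bijective_id, h,
    submatrix_one _ (Fin.castAdd_injective b c)]

lemma colsR_conjTranspose_mul_colsR {a b c : ℕ} {M : Matrix (Fin a) (Fin (b + c)) ℂ}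
    (h : Mᴴ * M = 1) : (colsR M)ᴴ * colsR M = 1 := by
  rw [colsR, conjTranspose_submatrix, ← submatrix_mul _ _ _ _ _ Function.bijective_id, h,
    submatrix_one _ (Fin.natAdd_injective c b)]

lemma colsL_conjTranspose_mul_colsR {a b c : ℕ} {M : Matrix (Fin a) (Fin (b + c)) ℂ}
    (h : Mᴴ * M = 1) : (colsL M)ᴴ * colsR M = 0 := by
  rw [colsL, colsR, conjTranspose_submatrix, ← submatrix_mul _ _ _ _ _ Function.bijective_id, h]
  ext i j
  exact one_apply_ne (by simp [Fin.ext_iff]; omega)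

lemma isSingularSplitting_mul_diagRect_mul_conjTranspose {m n k a b : ℕ} (σ : ℕ → ℝ)
    {U : Matrix (Fin m) (Fin (k + a)) ℂ} {V : Matrix (Fin n) (Fin (k + b)) ℂ}
    (hU : Uᴴ * U = 1) (hV : Vᴴ * V = 1) :
    IsSingularSplitting (U * diagRect σ 0 (k + a) (k + b) * Vᴴ)
      (colsL U) (diagonal fun i : Fin k => (σ i : ℂ)) (colsL V)
      (colsR U) (diagRect σ k a b) (colsR V) where
  eq_add := by rw [mul_diagRect_mul_conjTranspose, diagRect_self]
  left₁ := colsL_conjTranspose_mul_colsL hU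
  left₂ := colsR_conjTranspose_mul_colsR hU
  left₁₂ := colsL_conjTranspose_mul_colsR hU
  right₁ := colsL_conjTranspose_mul_colsL hV
  right₂ := colsR_conjTranspose_mul_colsR hV
  right₁₂ := colsL_conjTranspose_mul_colsR hV

open scoped ComplexOrder in
lemma mul_rpinv {a b : ℕ} {M : Matrix (Fin a) (Fin b) ℂ} (hM : M.rank = a) : M * rpinv M = 1 := by
  have hunit : IsUnit (M * Mᴴ) := by
    rw [← linearIndependent_rows_iff_isUnit, linearIndependent_iff_card_eq_finrank_span,
      Set.finrank, ← rank_eq_finrank_span_row, rank_self_mul_conjTranspose, hM, Fintype.card_fin]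
  rw [rpinv, ← Matrix.mul_assoc, mul_nonsing_inv _ ((isUnit_iff_isUnit_det _).1 hunit)]

lemma l2_opNorm_diagRect_le_sub_mul {m n k p : ℕ} {U : Matrix (Fin m) (Fin (k + p)) ℂ}
    {V : Matrix (Fin n) (Fin (k + p)) ℂ} {σ : ℕ → ℝ} (hU : Uᴴ * U = 1) (hV : Vᴴ * V = 1)
    (hσ : Antitone σ) (hσ_nonneg : ∀ i, 0 ≤ σ i) (X : Matrix (Fin m) (Fin k) ℂ)
    (Y : Matrix (Fin k) (Fin n) ℂ) :
    ‖diagRect σ k p p‖ ≤ ‖U * diagRect σ 0 (k + p) (k + p) * Vᴴ - X * Y‖ := by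
  have gram : (U * diagRect σ 0 (k + p) (k + p) * Vᴴ * V)ᴴ *
      (U * diagRect σ 0 (k + p) (k + p) * Vᴴ * V) =
      (diagonal fun i : Fin (k + p) => (σ i : ℂ))ᴴ *
        diagonal fun i : Fin (k + p) => (σ i : ℂ) := by
    rw [Matrix.mul_assoc _ Vᴴ, hV, Matrix.mul_one, conjTranspose_mul, Matrix.mul_assoc,
      ← Matrix.mul_assoc Uᴴ, hU, Matrix.one_mul, diagRect_self]
  refine l2_opNorm_diagRect_le (norm_nonneg _) fun i hi => ?_
  rw [abs_of_nonneg (hσ_nonneg _)]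
  exact le_l2_opNorm_sub_mul (τ := fun i : Fin (k + p) => σ i) hV
    (hσ.comp_monotone Fin.val_strictMono.monotone) (fun i => hσ_nonneg i) gram X Y
    (i := Fin.natAdd k ⟨i, hi⟩) (Nat.le_add_right k i)

lemma sval_le_of_l2_opNorm_mul_diagonal_le {l m k : ℕ} {T : Matrix (Fin l) (Fin k) ℂ}
    {σ : Fin k → ℝ} (hσ : Antitone σ) (hσ_pos : ∀ i, 0 < σ i) {M : Matrix (Fin m) (Fin k) ℂ}
    {s x γ : ℝ} (hs : 0 ≤ s) (hx : 0 ≤ x) (hγ : γ < 1)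
    (hT : ‖T * diagonal fun i => (σ i : ℂ)‖ ≤ s * (x * ‖M‖) / (1 - γ)) (j : Fin k) :
    sval T (k - 1 - j) ≤ s / σ j * (x / (1 - γ)) * sval M 0 := by
  have : NeZero k := ⟨j.pos.ne'⟩
  have hσj := hσ_pos j
  have : 0 < 1 - γ := sub_pos.2 hγ
  calc sval T (k - 1 - j) ≤ ‖T * diagonal fun i => (σ i : ℂ)‖ / σ j :=
        sval_le_l2_opNorm_mul_diagonal_div hσ hσ_pos j
    _ ≤ s * (x * ‖M‖) / (1 - γ) / σ j := by gcongr
    _ = s / σ j * (x / (1 - γ)) * ‖M‖ := by ring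
    _ ≤ s / σ j * (x / (1 - γ)) * sval M 0 := by gcongr; exact l2_opNorm_le_sval_zero M

theorem IsSingularSplitting.max_sval_sin_le_of_power_iteration {m n r k b : ℕ} {a a' b' : Type*}
    [Fintype a] [Fintype a'] [Fintype b'] [DecidableEq a] [DecidableEq a'] [DecidableEq b']
    {A : Matrix (Fin m) (Fin n) ℂ} {U₁ U₁' : Matrix (Fin m) (Fin k) ℂ} {σ : Fin k → ℝ}
    {D' : Matrix (Fin k) (Fin k) ℂ} {V₁ V₁' : Matrix (Fin n) (Fin k) ℂ}
    {U₂ : Matrix (Fin m) a ℂ} {S : Matrix a (Fin b) ℂ} {V₂ : Matrix (Fin n) (Fin b) ℂ}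
    {U₂' : Matrix (Fin m) a' ℂ} {S' : Matrix a' b' ℂ} {V₂' : Matrix (Fin n) b' ℂ}
    (h : IsSingularSplitting A U₁ (diagonal fun i => (σ i : ℂ)) V₁ U₂ S V₂)
    {P : Matrix (Fin m) (Fin m) ℂ} (hP : IsStarProjection P)
    (h' : IsSingularSplitting (P * A) U₁' D' V₁' U₂' S' V₂')
    (hσ : Antitone σ) {c : ℝ} (hcσ : ∀ i, c ≤ σ i)
    {Ω : Matrix (Fin n) (Fin r) ℂ} {K : Matrix (Fin r) (Fin k) ℂ} (hK : V₁ᴴ * Ω * K = 1) {q : ℕ}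
    (hPΩ : P * ((A * Aᴴ) ^ q * A * Ω) = (A * Aᴴ) ^ q * A * Ω)
    {s : ℝ} (hS : ‖S‖ ≤ s) (hS' : ‖S'‖ ≤ s) (hsc : s < c) (j : Fin k) :
    max (sval ((1 - U₁' * U₁'ᴴ) * U₁) (k - 1 - j)) (sval ((1 - V₁' * V₁'ᴴ) * V₁) (k - 1 - j)) ≤
      s / σ j * ((s / c) ^ (2 * q) / (1 - s / c)) * sval (V₂ᴴ * Ω * K) 0 := by
  have hs : 0 ≤ s := (norm_nonneg S).trans hS
  have hc : 0 < c := hs.trans_lt hsc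
  have hσ_pos (i : Fin k) : 0 < σ i := hc.trans_le (hcσ i)
  have hγ : s * ‖(diagonal fun i => (σ i : ℂ))⁻¹‖ ≤ s / c :=
    mul_le_mul_of_nonneg_left (l2_opNorm_inv_diagonal_le hc hcσ) hs
  have hγ_lt : s / c < 1 := (div_lt_one hc).2 hsc
  have hx : 0 ≤ (s / c) ^ (2 * q) := by positivity
  obtain ⟨hleft, hright⟩ := h.l2_opNorm_sin_mul_le_of_power_iteration hP h'
    (isUnit_diagonal_ofReal hσ_pos) hK hPΩ hS hS' hγ hγ_lt
  have hstar : (diagonal fun i => (σ i : ℂ))ᴴ = diagonal fun i => (σ i : ℂ) :=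
    (diagonal_conjTranspose _).trans (congrArg _ (funext fun i => Complex.conj_ofReal (σ i)))
  rw [hstar] at hright
  exact max_le (sval_le_of_l2_opNorm_mul_diagonal_le hσ hσ_pos hs hx hγ_lt hleft j)
    (sval_le_of_l2_opNorm_mul_diagonal_le hσ hσ_pos hs hx hγ_lt hright j)

end BlockDecomposition

open scoped Matrix.Norms.L2Operator in
theorem individual_angles_truncated_general {m n p r k a b ρ : ℕ} (q : ℕ)
    {A : Matrix (Fin m) (Fin n) ℂ} {U : Matrix (Fin m) (Fin (k + a)) ℂ}
    {V : Matrix (Fin n) (Fin (k + b)) ℂ} {σ : ℕ → ℝ} (hU : Uᴴ * U = 1) (hV : Vᴴ * V = 1)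
    (hσ_nonneg : ∀ i, 0 ≤ σ i) (hσ : Antitone σ) (hA : A = U * diagRect σ 0 (k + a) (k + b) * Vᴴ)
    (hgap : σ k < σ (k - 1))
    {Ω : Matrix (Fin n) (Fin r) ℂ} {K : Matrix (Fin r) (Fin k) ℂ} (hK : (colsL V)ᴴ * Ω * K = 1)
    {Q : Matrix (Fin m) (Fin p) ℂ} {R : Matrix (Fin p) (Fin r) ℂ} (hQ : Qᴴ * Q = 1)
    (hQR : (A * Aᴴ) ^ q * A * Ω = Q * R)
    {UB : Matrix (Fin p) (Fin (k + ρ)) ℂ} {Vh : Matrix (Fin n) (Fin (k + ρ)) ℂ} {σh : ℕ → ℝ}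
    (hUB : UBᴴ * UB = 1) (hVh : Vhᴴ * Vh = 1) (hσh_nonneg : ∀ i, 0 ≤ σh i) (hσh : Antitone σh)
    (hB : Qᴴ * A = UB * diagRect σh 0 (k + ρ) (k + ρ) * Vhᴴ) (j : Fin k) :
    max (sval ((1 - colsL (Q * UB) * (colsL (Q * UB))ᴴ) * colsL U) (k - 1 - j))
        (sval ((1 - colsL Vh * (colsL Vh)ᴴ) * colsL V) (k - 1 - j)) ≤
      σ k / σ j * ((σ k / σ (k - 1)) ^ (2 * q) / (1 - σ k / σ (k - 1))) *
        sval ((colsR V)ᴴ * Ω * K) 0 := by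
  have hσ_le (i : Fin k) : σ (k - 1) ≤ σ i := hσ (by omega)
  have hP : IsStarProjection (Q * Qᴴ) := isStarProjection_mul_conjTranspose hQ
  have hQUB : (Q * UB)ᴴ * (Q * UB) = 1 := by
    rw [conjTranspose_mul, Matrix.mul_assoc, ← Matrix.mul_assoc Qᴴ, hQ, Matrix.one_mul, hUB]
  have hPA : Q * Qᴴ * A = Q * UB * diagRect σh 0 (k + ρ) (k + ρ) * Vhᴴ := by
    rw [Matrix.mul_assoc, hB, ← Matrix.mul_assoc, ← Matrix.mul_assoc]
  have hPΩ : Q * Qᴴ * ((A * Aᴴ) ^ q * A * Ω) = (A * Aᴴ) ^ q * A * Ω := by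
    rw [hQR, Matrix.mul_assoc, ← Matrix.mul_assoc Qᴴ, hQ, Matrix.one_mul]
  have h := isSingularSplitting_mul_diagRect_mul_conjTranspose σ hU hV
  rw [← hA] at h
  have h' := isSingularSplitting_mul_diagRect_mul_conjTranspose σh hQUB hVh
  rw [← hPA] at h'
  have hS : ‖diagRect σ k a b‖ ≤ σ k := l2_opNorm_diagRect_le (hσ_nonneg k) fun i _ => by
    rw [abs_of_nonneg (hσ_nonneg _)]
    exact hσ (Nat.le_add_right k i)
  have hS' : ‖diagRect σh k ρ ρ‖ ≤ σ k := by
    have := l2_opNorm_diagRect_le_sub_mul hQUB hVh hσh hσh_nonneg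
      (Q * Qᴴ * (colsL U * diagonal fun i : Fin k => (σ i : ℂ))) (colsL V)ᴴ
    rw [← hPA] at this
    exact this.trans ((h.l2_opNorm_mul_sub_mul_le hP.norm_le).trans hS)
  exact h.max_sval_sin_le_of_power_iteration hP h' (hσ.comp_monotone Fin.val_strictMono.monotone)
    hσ_le hK hPΩ hS hS' hgap j

/-- Theorem 3.5 (individual canonical angles after rank-k truncation). -/
theorem individual_angles_truncated
    {k m₂ n₂ ρ : ℕ} (q : ℕ) (hk : 1 ≤ k)
    (A : Matrix (Fin (k + m₂)) (Fin (k + n₂)) ℂ)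
    (U : Matrix (Fin (k + m₂)) (Fin (k + m₂)) ℂ)
    (V : Matrix (Fin (k + n₂)) (Fin (k + n₂)) ℂ)
    (σ : ℕ → ℝ)
    (hU : Uᴴ * U = 1) (hU' : U * Uᴴ = 1)
    (hV : Vᴴ * V = 1) (hV' : V * Vᴴ = 1)
    (hσ0 : ∀ i, 0 ≤ σ i) (hσm : ∀ i j, i ≤ j → σ j ≤ σ i)
    (hA : A = U * diagRect σ 0 (k + m₂) (k + n₂) * Vᴴ)
    (hrank : 0 < σ (k - 1)) (hgap : σ k < σ (k - 1))
    (Ω : Matrix (Fin (k + n₂)) (Fin (k + ρ)) ℂ)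
    (hΩ : ((colsL V)ᴴ * Ω).rank = k)
    (Q : Matrix (Fin (k + m₂)) (Fin (k + ρ)) ℂ)
    (R : Matrix (Fin (k + ρ)) (Fin (k + ρ)) ℂ)
    (hQ : Qᴴ * Q = 1) (hR : R.BlockTriangular id)
    (hQR : (A * Aᴴ) ^ q * A * Ω = Q * R)
    (UB : Matrix (Fin (k + ρ)) (Fin (k + ρ)) ℂ)
    (Vh : Matrix (Fin (k + n₂)) (Fin (k + ρ)) ℂ)
    (σh : ℕ → ℝ)
    (hUB : UBᴴ * UB = 1) (hUB' : UB * UBᴴ = 1)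
    (hVh : Vhᴴ * Vh = 1)
    (hσh0 : ∀ i, 0 ≤ σh i) (hσhm : ∀ i j, i ≤ j → σh j ≤ σh i)
    (hB : Qᴴ * A = UB * diagRect σh 0 (k + ρ) (k + ρ) * Vhᴴ)
    :
    ∀ j : Fin k,
      max (sval ((1 - colsL (Q * UB) * (colsL (Q * UB))ᴴ) * colsL U) (k - 1 - (j : ℕ))) (sval ((1 - colsL Vh * (colsL Vh)ᴴ) * colsL V) (k - 1 - (j : ℕ))) ≤
        (σ k / σ (j : ℕ)) * ((σ k / σ (k - 1)) ^ (2 * q) / (1 - (σ k / σ (k - 1)))) * sval ((colsR V)ᴴ * Ω * rpinv ((colsL V)ᴴ * Ω)) 0 :=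
  individual_angles_truncated_general q hU hV hσ0 (fun i j => hσm i j) hA hgap (mul_rpinv hΩ) hQ
    hQR hUB hVh hσh0 (fun i j => hσhm i j) hB
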